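/- Let n ≥ 3 and let Φ be a finite-dimensional complex representation of GL_n(F_q) such that: (a) the representation W_0(F_q^n) is isomorphic to a subrepresentation of Φ; (b) the restriction of Φ to SL_n(F_q), together with one added copy of the trivial representation, is isomorphic to the restriction of the total Weil module W(F_q^n) to SL_n(F_q); (c) the character of Φ ⊕ 𝟙 takes values only in {1, q, q², …, q^n}. Then there exists an integer e such that Φ ≅ ⊕_{j=0}^{q−2} W_j(F_q^n) ⊗ X^{e·j}, where X is the one-dimensional representation of GL_n(F_q) of order q−1 defined by X(g) = λ^k whenever det(g) = α^k. -/

import Mathlib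

open Matrix

/-- The "j-th Weil vector" `u^{(j)} := ∑_{i=0}^{q-2} λ^{-ij} e_{α^i • u}` in the total Weil
module `U →₀ ℂ`. -/
noncomputable def weilVec {Fq U : Type*} [Field Fq] [AddCommGroup U] [Module Fq U]
    (q : ℕ) (α : Fq) (lam : ℂ) (j : ℕ) (u : U) : U →₀ ℂ :=
  ∑ i ∈ Finset.range (q - 1), (lam ^ (i * j))⁻¹ • Finsupp.single ((α ^ i) • u) (1 : ℂ)

/-- The submodule `W_j(U)`, the ℂ-span of the vectors `u^{(j)}` for `u ≠ 0`. -/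
noncomputable def weilSub (Fq : Type*) {U : Type*} [Field Fq] [AddCommGroup U] [Module Fq U]
    (q : ℕ) (α : Fq) (lam : ℂ) (j : ℕ) : Submodule ℂ (U →₀ ℂ) :=
  Submodule.span ℂ (weilVec (Fq := Fq) q α lam j '' {u : U | u ≠ 0})

/-- The ℂ-linear action of `g ∈ GL_n(F_q)` on the total Weil module
`(Fin n → Fq) →₀ ℂ`, permuting the basis vectors `e_v` by `v ↦ g v`. -/
noncomputable def glWeilMap {n : ℕ} {Fq : Type*} [Field Fq] [Fintype Fq]
    (g : GL (Fin n) Fq) : ((Fin n → Fq) →₀ ℂ) →ₗ[ℂ] ((Fin n → Fq) →₀ ℂ) :=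
  Finsupp.lmapDomain ℂ ℂ (fun v : Fin n → Fq => (g : Matrix (Fin n) (Fin n) Fq) *ᵥ v)

/-!
On `SL_n`, the representation `Φ` is the sum of the `W_j`, since `W` is that sum and `ℂ e_0`. For
`j ≠ 0` a Schur-type argument makes the copy of `W_j` in `Φ` stable under `GL_n`, which acts on it
through `W_j` twisted by a linear character `α ^ k ↦ c_j ^ k` of the determinant, and `c_0 = 1` by
assumption. For each `m` there is `g` with `det g = α` whose only eigenvalue over the base field is
`α ^ (-m)`. The trace of `g` on `W_j` is then a positive multiple, independent of `j`, of
`λ ^ (-m j)`, so that the character of `Φ` at `g` is a positive multiple of `∑ j, c_j λ ^ (-m j)`.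
Hence `j ↦ c_j` has nonnegative Fourier coefficients, which sum to `c_0 = 1`. As every `c_j` has
modulus one, strict convexity of the disc leaves only one nonzero coefficient: `c_j = λ ^ (e j)`.
-/

section LinearAlgebra

variable {F U : Type*} [Field F] [AddCommGroup U] [Module F U]

theorem span_pair_lt_top (hU : 2 < Module.finrank F U) (u v : U) :
    Submodule.span F {u, v} < ⊤ := by
  classical
  refine Ne.lt_top fun h => ?_
  have hle := finrank_span_finset_le_card (R := F) ({u, v} : Finset U)
  rw [Finset.coe_pair, Set.finrank, h, finrank_top] at hle
  exact absurd (hle.trans Finset.card_le_two) hU.not_ge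

variable [FiniteDimensional F U]

theorem exists_det_eq_and_eqOn {p : Submodule F U} (hp : p < ⊤) {g : U →ₗ[F] U}
    (hg : LinearMap.det g ≠ 0) (d : F) :
    ∃ f : U →ₗ[F] U, LinearMap.det f = d ∧ ∀ x ∈ p, f x = g x := by
  obtain ⟨φ, hφ, hpφ⟩ := Submodule.exists_le_ker_of_lt_top p hp
  obtain ⟨w, hw⟩ := LinearMap.surjective hφ (d / LinearMap.det g - 1)
  refine ⟨g ∘ₗ LinearMap.transvection φ w, ?_, fun x hx => ?_⟩
  · rw [LinearMap.det_comp, LinearMap.transvection.det, hw, add_sub_cancel, mul_div_cancel₀ _ hg]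
  · have hφx : φ x = 0 := hpφ hx
    rw [LinearMap.comp_apply, LinearMap.transvection.apply, hφx, zero_smul, add_zero]

theorem exists_det_eq_one_smul_pair (hU : 2 < Module.finrank F U) (u v : U) {c : F} (hc : c ≠ 0) :
    ∃ f : U →ₗ[F] U, LinearMap.det f = 1 ∧ f u = c • u ∧ f v = c • v := by
  have hdet : LinearMap.det (c • LinearMap.id : U →ₗ[F] U) ≠ 0 := by
    rw [LinearMap.det_smul, LinearMap.det_id, mul_one]
    exact pow_ne_zero _ hc
  obtain ⟨f, hf, hfp⟩ := exists_det_eq_and_eqOn (span_pair_lt_top hU u v) hdet 1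
  exact ⟨f, hf, hfp u (Submodule.subset_span (by simp)), hfp v (Submodule.subset_span (by simp))⟩

theorem exists_det_eq_one_fix_and_smul (hU : 2 < Module.finrank F U) {u v : U}
    (huv : v ∉ Submodule.span F {u}) {c : F} (hc : c ≠ 0) :
    ∃ f : U →ₗ[F] U, LinearMap.det f = 1 ∧ f u = u ∧ f v = c • v := by
  obtain ⟨ψ, hψv, hψ⟩ := Submodule.exists_le_ker_of_notMem huv
  have hψu : ψ u = 0 := hψ (Submodule.mem_span_singleton_self u)
  have hdet : LinearMap.det (LinearMap.transvection ψ (((c - 1) / ψ v) • v)) ≠ 0 := by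
    rwa [LinearMap.transvection.det, map_smul, smul_eq_mul, div_mul_cancel₀ _ hψv, add_sub_cancel]
  obtain ⟨f, hf, hfp⟩ := exists_det_eq_and_eqOn (span_pair_lt_top hU u v) hdet 1
  refine ⟨f, hf, ?_, ?_⟩
  · rw [hfp u (Submodule.subset_span (by simp)), LinearMap.transvection.apply, hψu, zero_smul,
      add_zero]
  · rw [hfp v (Submodule.subset_span (by simp)), LinearMap.transvection.apply, smul_smul,
      mul_div_cancel₀ _ hψv, sub_smul, one_smul, add_sub_cancel]

theorem exists_det_eq_one_apply_eq (hU : 1 < Module.finrank F U) {u v : U} (hu : u ≠ 0)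
    (hv : v ≠ 0) : ∃ f : U →ₗ[F] U, LinearMap.det f = 1 ∧ f u = v := by
  have hlt : Submodule.span F {u} < ⊤ := by
    refine Ne.lt_top fun h => ?_
    rw [← finrank_top, ← h, finrank_span_singleton hu] at hU
    exact hU.false
  obtain ⟨g, hg⟩ := Submodule.exists_linearEquiv_restrict_eq
    ((LinearEquiv.toSpanNonzeroSingleton F U u hu).symm ≪≫ₗ
      LinearEquiv.toSpanNonzeroSingleton F U v hv)
  obtain ⟨f, hf, hfp⟩ := exists_det_eq_and_eqOn hlt (LinearEquiv.isUnit_det' g).ne_zero 1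
  refine ⟨f, hf, ?_⟩
  rw [hfp u (Submodule.mem_span_singleton_self u), LinearEquiv.coe_coe,
    ← hg ⟨u, Submodule.mem_span_singleton_self u⟩, LinearEquiv.trans_apply,
    (LinearEquiv.symm_apply_eq _).2 (LinearEquiv.toSpanNonzeroSingleton_one F U u hu).symm,
    LinearEquiv.toSpanNonzeroSingleton_one]

end LinearAlgebra

section FiniteField

variable {F : Type*} [Field F] [Finite F]

theorem exists_forall_sq_sub_mul_add_ne_zero {d : F} (hd : d ≠ 0) :
    ∃ t : F, ∀ r : F, r ^ 2 - t * r + d ≠ 0 := by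
  have := Fintype.ofFinite F
  classical
  obtain ⟨t, ht⟩ : ∃ t : F, ∀ r : Fˣ, (r : F) + d * (r⁻¹ : Fˣ) ≠ t := by
    by_contra! h
    have hle := Fintype.card_le_of_surjective (fun r : Fˣ => (r : F) + d * (r⁻¹ : Fˣ)) h
    rw [Fintype.card_units] at hle
    have := Fintype.card_pos (α := F)
    omega
  refine ⟨t, fun r hr => ?_⟩
  have hr0 : r ≠ 0 := by
    rintro rfl
    exact hd (by simpa using hr)
  refine ht (Units.mk0 r hr0) ?_
  rw [Units.val_inv_eq_inv_val, Units.val_mk0]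
  field_simp
  linear_combination hr

theorem exists_det_eq_forall_apply_ne_smul {d : F} (hd : d ≠ 0) :
    ∃ f : (Fin 2 → F) →ₗ[F] (Fin 2 → F), LinearMap.det f = d ∧
      ∀ (c : F) (x : Fin 2 → F), x ≠ 0 → f x ≠ c • x := by
  obtain ⟨t, ht⟩ := exists_forall_sq_sub_mul_add_ne_zero hd
  refine ⟨Matrix.toLin' !![0, -d; 1, t], by simp, fun c x hx h => ?_⟩
  rw [Matrix.toLin'_apply] at h
  have h0 : -(d * x 1) = c * x 0 := by simpa [Matrix.mulVec, vecHead, vecTail] using congrFun h 0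
  have h1 : x 0 + t * x 1 = c * x 1 := by
    simpa [Matrix.mulVec, vecHead, vecTail] using congrFun h 1
  have hx1 : x 1 = 0 := by
    refine (mul_eq_zero.1 ?_).resolve_left (ht c)
    linear_combination -h0 - c * h1
  have hx0 : x 0 = 0 := by simpa [hx1] using h1
  exact hx (funext fun i => by fin_cases i <;> assumption)

variable {U : Type*} [AddCommGroup U] [Module F U] [FiniteDimensional F U]

theorem exists_det_eq_with_unique_eigenvalue (hU : 2 < Module.finrank F U) {a β : F} (ha : a ≠ 0)
    (hβ : β ≠ 0) :
    ∃ f : U →ₗ[F] U, LinearMap.det f = a ∧ (∃ u ≠ 0, f u = β • u) ∧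
      ∀ (γ : F) (u : U), u ≠ 0 → f u = γ • u → γ = β := by
  set m := Module.finrank F U - 2
  obtain ⟨A, hAdet, hA⟩ := exists_det_eq_forall_apply_ne_smul
    (div_ne_zero ha (pow_ne_zero (2 + m) hβ))
  let e : ((Fin 2 → F) × (Fin m → F)) ≃ₗ[F] U := LinearEquiv.ofFinrankEq _ _ <| by
    rw [Module.finrank_prod, Module.finrank_fin_fun, Module.finrank_fin_fun]
    omega
  let B : ((Fin 2 → F) × (Fin m → F)) →ₗ[F] ((Fin 2 → F) × (Fin m → F)) :=
    β • A.prodMap LinearMap.id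
  refine ⟨e ∘ₗ B ∘ₗ e.symm, ?_, ⟨e (0, fun _ => 1), ?_, ?_⟩, fun γ u hu h => ?_⟩
  · rw [LinearMap.det_conj, LinearMap.det_smul, LinearMap.det_prodMap, LinearMap.det_id, mul_one,
      hAdet, Module.finrank_prod, Module.finrank_fin_fun, Module.finrank_fin_fun,
      mul_div_cancel₀ _ (pow_ne_zero _ hβ)]
  · have hm : 0 < m := by omega
    rw [Ne, e.map_eq_zero_iff]
    exact fun h => one_ne_zero (congrFun (congrArg Prod.snd h) ⟨0, hm⟩)
  · rw [LinearMap.comp_apply, LinearMap.comp_apply, LinearEquiv.coe_coe, LinearEquiv.coe_coe,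
      e.symm_apply_apply, ← map_smul]
    simp [B]
  · obtain ⟨⟨x, y⟩, rfl⟩ := e.surjective u
    have hB : B (x, y) = γ • (x, y) := e.injective <| by
      simpa only [LinearMap.comp_apply, LinearEquiv.coe_coe, e.symm_apply_apply, map_smul] using h
    obtain ⟨hx, hy⟩ : β • A x = γ • x ∧ β • y = γ • y := Prod.mk.inj hB
    by_contra hne
    obtain rfl : y = 0 := by
      have : (β - γ) • y = 0 := by rw [sub_smul, hy, sub_self]
      exact (smul_eq_zero.1 this).resolve_left (sub_ne_zero.2 (Ne.symm hne))
    refine hA (γ / β) x (fun hx0 => hu (by simp [hx0])) ?_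
    rw [div_eq_inv_mul, mul_smul, ← hx, inv_smul_smul₀ hβ]

end FiniteField

section Fourier

open scoped ComplexOrder

variable {N : ℕ} {lam : ℂ}

theorem nonneg_of_one_add_eq_pow {q i : ℕ} (hq : 0 < q) {t : ℂ} (h : 1 + t = (q : ℂ) ^ i) :
    0 ≤ t := by
  rw [eq_sub_of_add_eq' h, sub_nonneg]
  exact_mod_cast Nat.one_le_pow i q hq

theorem sum_pow_mul_inv_pow (hlam : IsPrimitiveRoot lam N) {i j : ℕ} (hi : i < N) (hj : j < N) :
    ∑ m ∈ Finset.range N, lam ^ (m * i) * (lam ^ (m * j))⁻¹ = if i = j then (N : ℂ) else 0 := by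
  have hlam0 : lam ≠ 0 := hlam.ne_zero (by omega)
  have hsum : ∑ m ∈ Finset.range N, lam ^ (m * i) * (lam ^ (m * j))⁻¹ =
      ∑ m ∈ Finset.range N, (lam ^ i / lam ^ j) ^ m := by
    refine Finset.sum_congr rfl fun m _ => ?_
    rw [div_pow, ← pow_mul, ← pow_mul, mul_comm i, mul_comm j, div_eq_mul_inv]
  rw [hsum]
  split_ifs with hij
  · rw [hij, div_self (pow_ne_zero j hlam0)]
    simp
  · have hne : lam ^ i / lam ^ j ≠ 1 := fun h =>
      hij (hlam.pow_inj hi hj ((div_eq_one_iff_eq (pow_ne_zero j hlam0)).1 h))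
    rw [geom_sum_eq hne, div_pow, ← pow_mul, ← pow_mul, mul_comm i, mul_comm j, pow_mul, pow_mul,
      hlam.pow_eq_one, one_pow, one_pow, div_one, sub_self, zero_div]

theorem fourier_inversion (hlam : IsPrimitiveRoot lam N) (c : Fin N → ℂ) (i : Fin N) :
    ∑ m ∈ Finset.range N, ((N : ℂ)⁻¹ * ∑ j, c j * (lam ^ (m * (j : ℕ)))⁻¹) * lam ^ (m * (i : ℕ)) =
      c i := by
  have hN : (N : ℂ) ≠ 0 := Nat.cast_ne_zero.2 i.pos.ne'
  calc _ = ∑ j, ((N : ℂ)⁻¹ * c j) *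
        ∑ m ∈ Finset.range N, lam ^ (m * (i : ℕ)) * (lam ^ (m * (j : ℕ)))⁻¹ := by
        simp_rw [Finset.mul_sum, Finset.sum_mul]
        rw [Finset.sum_comm]
        exact Finset.sum_congr rfl fun j _ => Finset.sum_congr rfl fun m _ => by ring
    _ = ∑ j, if i = j then c j else 0 := by
        refine Finset.sum_congr rfl fun j _ => ?_
        rw [sum_pow_mul_inv_pow hlam i.isLt j.isLt, mul_ite, mul_zero]
        exact if_congr Fin.ext_iff.symm (by field_simp) rfl
    _ = c i := by simp

theorem sum_smul_eq_of_norm_eq_one {E ι : Type*} [NormedAddCommGroup E] [NormedSpace ℝ E]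
    [StrictConvexSpace ℝ E] {s : Finset ι} {w : ι → ℝ} {z : ι → E} (hw : ∀ i ∈ s, 0 ≤ w i)
    (hsum : ∑ i ∈ s, w i = 1) (hz : ∀ i ∈ s, ‖z i‖ ≤ 1) (hnorm : ‖∑ i ∈ s, w i • z i‖ = 1) {e : ι}
    (he : e ∈ s) (hwe : w e ≠ 0) : ∑ i ∈ s, w i • z i = z e := by
  have hterm (i : ι) (hi : i ∈ s) : w i • z i = w i • z e := by
    by_contra hne
    have hwi : w i ≠ 0 := fun h => hne (by rw [h, zero_smul, zero_smul])
    have hzi : z i ≠ z e := fun h => hne (by rw [h])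
    exact (norm_sum_lt_of_strictConvexSpace hw hsum hi he hzi hwi hwe hz).ne hnorm
  rw [Finset.sum_congr rfl hterm, ← Finset.sum_smul, hsum, one_smul]

theorem exists_forall_eq_pow_of_fourier_nonneg [NeZero N] (hlam : IsPrimitiveRoot lam N)
    {c : Fin N → ℂ} (hc : ∀ j, ‖c j‖ = 1) (hc0 : c 0 = 1)
    (hnonneg : ∀ m < N, 0 ≤ ∑ j, c j * (lam ^ (m * (j : ℕ)))⁻¹) :
    ∃ e : ℕ, ∀ j : Fin N, c j = lam ^ (e * (j : ℕ)) := by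
  have hr (m : ℕ) (hm : m < N) :
      ∃ r : ℝ, 0 ≤ r ∧ (r : ℂ) = (N : ℂ)⁻¹ * ∑ j, c j * (lam ^ (m * (j : ℕ)))⁻¹ := by
    obtain ⟨s, hs, hs_eq⟩ := RCLike.nonneg_iff_exists_ofReal.1 (hnonneg m hm)
    exact ⟨(N : ℝ)⁻¹ * s, by positivity, by rw [← hs_eq]; push_cast; rfl⟩
  choose! r hr0 hr using hr
  have hinv (j : Fin N) : ∑ m ∈ Finset.range N, r m • lam ^ (m * (j : ℕ)) = c j := by
    rw [← fourier_inversion hlam c j]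
    refine Finset.sum_congr rfl fun m hm => ?_
    rw [Complex.real_smul, hr m (Finset.mem_range.1 hm)]
  have hsum : ∑ m ∈ Finset.range N, r m = 1 := by
    have h := hinv 0
    simp only [Fin.val_zero, mul_zero, pow_zero, hc0, Complex.real_smul, mul_one] at h
    exact_mod_cast h
  obtain ⟨e, he, hre⟩ : ∃ e ∈ Finset.range N, r e ≠ 0 :=
    Finset.exists_ne_zero_of_sum_ne_zero (by rw [hsum]; exact one_ne_zero)
  have hnorm (m : ℕ) : ‖lam ^ m‖ ≤ 1 := by
    rw [norm_pow, hlam.norm'_eq_one (NeZero.ne N), one_pow]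
  refine ⟨e, fun j => ?_⟩
  rw [← hinv j]
  exact sum_smul_eq_of_norm_eq_one (z := fun m => lam ^ (m * (j : ℕ)))
    (fun m hm => hr0 m (Finset.mem_range.1 hm)) hsum (fun m _ => hnorm _) (hinv j ▸ hc j) he hre

end Fourier

section WeilModule

variable {F U : Type*} [Field F] [AddCommGroup U] [Module F U]

/-- The endomorphism `e_u ↦ e_{f u}` of the total Weil module `U →₀ ℂ` induced by a linear
endomorphism `f` of `U`, so that `glWeilMap g` is `weilMap` of the action of `g` on `F ^ n`. -/
noncomputable def weilMap (f : U →ₗ[F] U) : (U →₀ ℂ) →ₗ[ℂ] (U →₀ ℂ) :=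
  Finsupp.lmapDomain ℂ ℂ f

theorem weilMap_single (f : U →ₗ[F] U) (u : U) (c : ℂ) :
    weilMap f (Finsupp.single u c) = Finsupp.single (f u) c :=
  Finsupp.mapDomain_single

theorem weilMap_id : weilMap (LinearMap.id : U →ₗ[F] U) = LinearMap.id :=
  Finsupp.lmapDomain_id ℂ ℂ

theorem weilMap_comp (f g : U →ₗ[F] U) : weilMap (f ∘ₗ g) = weilMap f ∘ₗ weilMap g :=
  Finsupp.lmapDomain_comp ℂ ℂ g f

theorem weilMap_apply_apply {f : U →ₗ[F] U} (hf : Function.Injective f) (x : U →₀ ℂ) (v : U) :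
    weilMap f x (f v) = x v :=
  Finsupp.mapDomain_apply hf x v

/-- The action of the scalar `α` on the total Weil module `U →₀ ℂ`; the submodules
`weilSub F q α lam j` lie in its eigenspaces. -/
noncomputable def weilScale (U : Type*) [AddCommGroup U] [Module F U] (α : F) :
    Module.End ℂ (U →₀ ℂ) :=
  weilMap (α • LinearMap.id : U →ₗ[F] U)

variable {q : ℕ} {α : F} {lam : ℂ}

theorem weilMap_weilVec (f : U →ₗ[F] U) (j : ℕ) (u : U) :
    weilMap f (weilVec q α lam j u) = weilVec q α lam j (f u) := by
  simp only [weilVec, map_sum, map_smul, weilMap_single]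

theorem weilVec_mem_weilSub (j : ℕ) {u : U} (hu : u ≠ 0) :
    weilVec q α lam j u ∈ weilSub F q α lam j :=
  Submodule.subset_span ⟨u, hu, rfl⟩

theorem weilSub_le_iff {j : ℕ} {p : Submodule ℂ (U →₀ ℂ)} :
    weilSub F q α lam j ≤ p ↔ ∀ u : U, u ≠ 0 → weilVec q α lam j u ∈ p :=
  Submodule.span_le.trans Set.forall_mem_image

theorem weilMap_mem_weilSub {f : U →ₗ[F] U} (hf : Function.Injective f) {j : ℕ} {x : U →₀ ℂ}
    (hx : x ∈ weilSub F q α lam j) : weilMap f x ∈ weilSub F q α lam j := by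
  have hle : weilSub F q α lam j ≤ (weilSub F q α lam j).comap (weilMap f) :=
    weilSub_le_iff.2 fun u hu => by
      rw [Submodule.mem_comap, weilMap_weilVec]
      exact weilVec_mem_weilSub j ((map_ne_zero_iff f hf).2 hu)
  exact hle hx

theorem weilScale_apply_smul (hα : α ≠ 0) (x : U →₀ ℂ) (v : U) :
    weilScale U α x (α • v) = x v :=
  weilMap_apply_apply (f := (α • LinearMap.id : U →ₗ[F] U)) (smul_right_injective U hα) x v

theorem mem_eigenspace_weilScale_iff (hα : α ≠ 0) {x : U →₀ ℂ} {c : ℂ} :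
    x ∈ Module.End.eigenspace (weilScale U α) c ↔ ∀ v, x v = c * x (α • v) := by
  rw [Module.End.mem_eigenspace_iff, DFunLike.ext_iff,
    (MulAction.surjective₀ hα : Function.Surjective (α • · : U → U)).forall]
  simp only [weilScale_apply_smul hα, Finsupp.smul_apply, smul_eq_mul]

variable [NeZero (q - 1)]

theorem weilVec_smul (hα : α ^ (q - 1) = 1) (hlam : lam ^ (q - 1) = 1) (j : ℕ) (u : U) :
    weilVec q α lam j (α • u) = lam ^ j • weilVec q α lam j u := by
  have hlam0 : lam ^ j ≠ 0 := pow_ne_zero j (IsUnit.of_pow_eq_one hlam (NeZero.ne _)).ne_zero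
  let t (i : ℕ) : U →₀ ℂ := (lam ^ (i * j))⁻¹ • Finsupp.single (α ^ i • u) 1
  have hshift (i : ℕ) : (lam ^ (i * j))⁻¹ • Finsupp.single (α ^ i • α • u) (1 : ℂ) =
      lam ^ j • t (i + 1) := by
    simp only [t, smul_smul, pow_succ, add_mul, pow_add, one_mul]
    rw [mul_inv, mul_comm (lam ^ j), inv_mul_cancel_right₀ hlam0]
  have hcyc : t (q - 1) = t 0 := by
    simp only [t, pow_mul, hα, hlam, one_pow, pow_zero]
  have hsum := (Finset.sum_range_succ t (q - 1)).symm.trans (Finset.sum_range_succ' t (q - 1))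
  rw [hcyc] at hsum
  rw [weilVec, weilVec, Finset.sum_congr rfl fun i _ => hshift i, ← Finset.smul_sum,
    add_right_cancel hsum]

theorem weilVec_pow_smul (hα : α ^ (q - 1) = 1) (hlam : lam ^ (q - 1) = 1) (i j : ℕ) (u : U) :
    weilVec q α lam j (α ^ i • u) = lam ^ (i * j) • weilVec q α lam j u := by
  induction i with
  | zero => simp
  | succ i ih =>
    rw [pow_succ', mul_smul, weilVec_smul hα hlam, ih, smul_smul, ← pow_add, add_mul, one_mul,
      add_comm]

theorem weilSub_le_eigenspace (hα : α ^ (q - 1) = 1) (hlam : lam ^ (q - 1) = 1) (j : ℕ) :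
    weilSub F q α lam j ≤ Module.End.eigenspace (weilScale U α) (lam ^ j) :=
  weilSub_le_iff.2 fun u _ => by
    rw [Module.End.mem_eigenspace_iff, ← weilVec_smul hα hlam]
    exact weilMap_weilVec (α • LinearMap.id : U →ₗ[F] U) j u

theorem weilVec_apply_self (hα : IsPrimitiveRoot α (q - 1)) (j : ℕ) {u : U} (hu : u ≠ 0) :
    weilVec q α lam j u u = 1 := by
  classical
  have hzero : ∀ i ∈ Finset.range (q - 1), i ≠ 0 →
      ((lam ^ (i * j))⁻¹ • Finsupp.single (α ^ i • u) (1 : ℂ)) u = 0 := by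
    intro i hi hi0
    rw [Finsupp.smul_apply, Finsupp.single_eq_of_ne', smul_zero]
    intro h
    exact hα.pow_ne_one_of_pos_of_lt hi0 (Finset.mem_range.1 hi)
      (smul_left_injective F hu (h.trans (one_smul F u).symm))
  rw [weilVec, Finsupp.finsetSum_apply, Finset.sum_eq_single_of_mem 0
    (Finset.mem_range.2 (NeZero.pos _)) hzero]
  simp

theorem sum_weilVec (hlam : IsPrimitiveRoot lam (q - 1)) (u : U) :
    ∑ j : Fin (q - 1), weilVec q α lam (j : ℕ) u = ((q - 1 : ℕ) : ℂ) • Finsupp.single u 1 := by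
  have hsum (i : ℕ) (hi : i ∈ Finset.range (q - 1)) :
      ∑ j ∈ Finset.range (q - 1), (lam ^ (i * j))⁻¹ = if 0 = i then ((q - 1 : ℕ) : ℂ) else 0 := by
    rw [← sum_pow_mul_inv_pow hlam (NeZero.pos _) (Finset.mem_range.1 hi)]
    simp only [mul_zero, pow_zero, one_mul, mul_comm i]
  rw [Fin.sum_univ_eq_sum_range (fun j => weilVec q α lam j u)]
  simp only [weilVec]
  rw [Finset.sum_comm]
  simp only [← Finset.sum_smul]
  rw [Finset.sum_congr rfl fun i hi => by rw [hsum i hi]]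
  simp [ite_smul, NeZero.pos (q - 1)]

end WeilModule

section SchurLemma

variable {F U : Type*} [Field F] [AddCommGroup U] [Module F U] [FiniteDimensional F U]

theorem injective_of_det_eq_one {f : U →ₗ[F] U} (hf : LinearMap.det f = 1) :
    Function.Injective f :=
  ((Module.End.isUnit_iff f).1 (f.isUnit_iff_isUnit_det.2 (hf ▸ isUnit_one))).injective

variable {q : ℕ} [NeZero (q - 1)] {α : F} {lam : ℂ} {j : ℕ}

theorem apply_mem_eigenspace_of_equivariant (hU : 2 < Module.finrank F U)
    (hα : α ^ (q - 1) = 1) (hlam : lam ^ (q - 1) = 1) {T : (U →₀ ℂ) →ₗ[ℂ] (U →₀ ℂ)}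
    (hT : ∀ f : U →ₗ[F] U, LinearMap.det f = 1 →
      ∀ x ∈ weilSub F q α lam j, T (weilMap f x) = weilMap f (T x))
    {x : U →₀ ℂ} (hx : x ∈ weilSub F q α lam j) :
    T x ∈ Module.End.eigenspace (weilScale U α) (lam ^ j) := by
  have hα0 : α ≠ 0 := (IsUnit.of_pow_eq_one hα (NeZero.ne _)).ne_zero
  have hle : weilSub F q α lam j ≤ (Module.End.eigenspace (weilScale U α) (lam ^ j)).comap T :=
    weilSub_le_iff.2 fun u hu => (mem_eigenspace_weilScale_iff hα0).2 fun v => by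
      obtain ⟨f, hf, hfu, hfv⟩ := exists_det_eq_one_smul_pair hU u v hα0
      have hTu := hT f hf _ (weilVec_mem_weilSub j hu)
      rw [weilMap_weilVec, hfu, weilVec_smul hα hlam, map_smul] at hTu
      rw [← weilMap_apply_apply (injective_of_det_eq_one hf), hfv, ← hTu, Finsupp.smul_apply,
        smul_eq_mul]
  exact hle hx

theorem eq_zero_of_mem_eigenspace_of_stabilizer_fixed (hU : 2 < Module.finrank F U)
    (hα : α ^ (q - 1) = 1) (hgen : ∀ x : F, x ≠ 0 → ∃ i : ℕ, x = α ^ i) {c : ℂ} (hc0 : c ≠ 0)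
    (hc1 : c ≠ 1) {u : U} {z : U →₀ ℂ} (hz : z ∈ Module.End.eigenspace (weilScale U α) c)
    (hfix : ∀ f : U →ₗ[F] U, LinearMap.det f = 1 → f u = u → weilMap f z = z) (hzu : z u = 0) :
    z = 0 := by
  have hα0 : α ≠ 0 := (IsUnit.of_pow_eq_one hα (NeZero.ne _)).ne_zero
  rw [mem_eigenspace_weilScale_iff hα0] at hz
  have hzero_of_fixed {v : U} (h : z (α • v) = z v) : z v = 0 := by
    have h1 := hz v
    rw [h] at h1
    exact (mul_eq_zero.1 (show (c - 1) * z v = 0 by linear_combination -h1)).resolve_left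
      (sub_ne_zero.2 hc1)
  have hzero_line (i : ℕ) : z (α ^ i • u) = 0 := by
    induction i with
    | zero => rwa [pow_zero, one_smul]
    | succ i ih =>
      rw [hz, smul_smul, ← pow_succ'] at ih
      exact (mul_eq_zero.1 ih).resolve_left hc0
  ext v
  rw [Finsupp.zero_apply]
  by_cases hv : v ∈ Submodule.span F {u}
  · obtain ⟨a, rfl⟩ := Submodule.mem_span_singleton.1 hv
    obtain rfl | ha := eq_or_ne a 0
    · rw [zero_smul]
      exact hzero_of_fixed (by rw [smul_zero])
    · obtain ⟨i, rfl⟩ := hgen a ha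
      exact hzero_line i
  · obtain ⟨f, hf, hfu, hfv⟩ := exists_det_eq_one_fix_and_smul hU hv hα0
    have hfz := weilMap_apply_apply (injective_of_det_eq_one hf) z v
    rw [hfix f hf hfu, hfv] at hfz
    exact hzero_of_fixed hfz

theorem exists_smul_weilVec_of_equivariant (hU : 2 < Module.finrank F U)
    (hα : IsPrimitiveRoot α (q - 1)) (hgen : ∀ x : F, x ≠ 0 → ∃ i : ℕ, x = α ^ i)
    (hlam : lam ^ (q - 1) = 1) (hj : lam ^ j ≠ 1) {T : (U →₀ ℂ) →ₗ[ℂ] (U →₀ ℂ)}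
    (hT : ∀ f : U →ₗ[F] U, LinearMap.det f = 1 →
      ∀ x ∈ weilSub F q α lam j, T (weilMap f x) = weilMap f (T x)) {u : U} (hu : u ≠ 0) :
    ∃ s : ℂ, T (weilVec q α lam j u) = s • weilVec q α lam j u := by
  have hmem := weilVec_mem_weilSub (q := q) (α := α) (lam := lam) j hu
  refine ⟨T (weilVec q α lam j u) u, sub_eq_zero.1 ?_⟩
  refine eq_zero_of_mem_eigenspace_of_stabilizer_fixed hU hα.pow_eq_one hgen
    (pow_ne_zero j (IsUnit.of_pow_eq_one hlam (NeZero.ne _)).ne_zero) hj (u := u)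
    (Submodule.sub_mem _ (apply_mem_eigenspace_of_equivariant hU hα.pow_eq_one hlam hT hmem)
      (Submodule.smul_mem _ _ (weilSub_le_eigenspace hα.pow_eq_one hlam j hmem)))
    (fun f hf hfu => ?_) ?_
  · rw [map_sub, map_smul, ← hT f hf _ hmem, weilMap_weilVec, hfu]
  · rw [Finsupp.sub_apply, Finsupp.smul_apply, weilVec_apply_self hα j hu, smul_eq_mul, mul_one,
      sub_self]

theorem exists_eq_smul_of_equivariant (hU : 2 < Module.finrank F U)
    (hα : IsPrimitiveRoot α (q - 1)) (hgen : ∀ x : F, x ≠ 0 → ∃ i : ℕ, x = α ^ i)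
    (hlam : lam ^ (q - 1) = 1) (hj : lam ^ j ≠ 1) {T : (U →₀ ℂ) →ₗ[ℂ] (U →₀ ℂ)}
    (hT : ∀ f : U →ₗ[F] U, LinearMap.det f = 1 →
      ∀ x ∈ weilSub F q α lam j, T (weilMap f x) = weilMap f (T x)) :
    ∃ s : ℂ, ∀ x ∈ weilSub F q α lam j, T x = s • x := by
  have : Nontrivial U := Module.nontrivial_of_finrank_pos (R := F) (by omega)
  obtain ⟨u₀, hu₀⟩ := exists_ne (0 : U)
  obtain ⟨s, hs⟩ := exists_smul_weilVec_of_equivariant hU hα hgen hlam hj hT hu₀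
  have hle : weilSub F q α lam j ≤ LinearMap.eqLocus T (s • LinearMap.id) :=
    weilSub_le_iff.2 fun u hu => by
      obtain ⟨f, hf, rfl⟩ := exists_det_eq_one_apply_eq (Nat.lt_of_succ_lt hU) hu₀ hu
      rw [LinearMap.mem_eqLocus, LinearMap.smul_apply, LinearMap.id_apply, ← weilMap_weilVec,
        hT f hf _ (weilVec_mem_weilSub j hu₀), hs, map_smul]
  exact ⟨s, fun x hx => hle hx⟩

theorem eq_zero_of_invariant (hU : 2 < Module.finrank F U) (hα : α ^ (q - 1) = 1)
    (hlam : lam ^ (q - 1) = 1) (hj : lam ^ j ≠ 1) {φ : (U →₀ ℂ) →ₗ[ℂ] ℂ}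
    (hφ : ∀ f : U →ₗ[F] U, LinearMap.det f = 1 →
      ∀ x ∈ weilSub F q α lam j, φ (weilMap f x) = φ x)
    {x : U →₀ ℂ} (hx : x ∈ weilSub F q α lam j) : φ x = 0 := by
  have hle : weilSub F q α lam j ≤ LinearMap.ker φ := weilSub_le_iff.2 fun u hu => by
    obtain ⟨f, hf, hfu, -⟩ := exists_det_eq_one_smul_pair hU u u
      (IsUnit.of_pow_eq_one hα (NeZero.ne _)).ne_zero
    have hφu := hφ f hf _ (weilVec_mem_weilSub j hu)
    rw [weilMap_weilVec, hfu, weilVec_smul hα hlam, map_smul, smul_eq_mul] at hφu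
    refine (mul_eq_zero.1 ?_).resolve_left (sub_ne_zero.2 hj)
    linear_combination hφu
  exact hle hx

end SchurLemma

section WeilProjection

variable {F U : Type*} [Field F] [AddCommGroup U] [Module F U]

open Classical in
/-- The averaging operator `e_u ↦ (q - 1)⁻¹ u^{(j)}` for `u ≠ 0`, `e_0 ↦ 0`; it is a projection of
the total Weil module onto `weilSub F q α lam j`. -/
noncomputable def weilProj (U : Type*) [AddCommGroup U] [Module F U] (q : ℕ) (α : F) (lam : ℂ)
    (j : ℕ) : Module.End ℂ (U →₀ ℂ) :=
  Finsupp.linearCombination ℂ fun u : U =>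
    if u = 0 then 0 else ((q - 1 : ℕ) : ℂ)⁻¹ • weilVec q α lam j u

variable {q : ℕ} {α : F} {lam : ℂ}

theorem weilProj_single_zero (j : ℕ) (c : ℂ) :
    weilProj U q α lam j (Finsupp.single 0 c) = 0 := by
  simp [weilProj]

theorem weilProj_single {u : U} (hu : u ≠ 0) (j : ℕ) :
    weilProj U q α lam j (Finsupp.single u 1) = ((q - 1 : ℕ) : ℂ)⁻¹ • weilVec q α lam j u := by
  simp [weilProj, hu]

theorem weilProj_mem (j : ℕ) (x : U →₀ ℂ) : weilProj U q α lam j x ∈ weilSub F q α lam j := by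
  induction x using Finsupp.induction_linear with
  | zero => simp only [map_zero, Submodule.zero_mem]
  | add x y hx hy => simpa only [map_add] using Submodule.add_mem _ hx hy
  | single u c =>
    obtain rfl | hu := eq_or_ne u 0
    · simp only [weilProj_single_zero, Submodule.zero_mem]
    · rw [← mul_one c, ← smul_eq_mul, ← Finsupp.smul_single, map_smul, weilProj_single hu]
      exact Submodule.smul_mem _ _ (Submodule.smul_mem _ _ (weilVec_mem_weilSub j hu))

theorem trace_weilMap_comp_weilProj [Finite U] (f : U →ₗ[F] U) (j : ℕ) :
    LinearMap.trace ℂ (U →₀ ℂ) (weilMap f ∘ₗ weilProj U q α lam j) =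
      ((q - 1 : ℕ) : ℂ)⁻¹ * ∑ i ∈ Finset.range (q - 1),
        (lam ^ (i * j))⁻¹ * ({u : U | u ≠ 0 ∧ α ^ i • f u = u}.ncard : ℂ) := by
  classical
  have := Fintype.ofFinite U
  have hcoeff (u : U) : weilMap f (weilProj U q α lam j (Finsupp.single u 1)) u =
      ((q - 1 : ℕ) : ℂ)⁻¹ * ∑ i ∈ Finset.range (q - 1),
        (lam ^ (i * j))⁻¹ * if u ≠ 0 ∧ α ^ i • f u = u then 1 else 0 := by
    obtain rfl | hu := eq_or_ne u 0
    · simp [weilProj_single_zero]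
    · rw [weilProj_single hu, map_smul, weilMap_weilVec]
      simp [weilVec, Finsupp.single_apply, hu]
  rw [LinearMap.trace_eq_matrix_trace ℂ Finsupp.basisSingleOne, Matrix.trace]
  simp only [Matrix.diag_apply, LinearMap.toMatrix_apply, Finsupp.coe_basisSingleOne,
    Finsupp.basisSingleOne_repr, LinearEquiv.refl_apply, LinearMap.comp_apply, hcoeff]
  rw [← Finset.mul_sum, Finset.sum_comm]
  simp only [← Finset.mul_sum, Finset.sum_boole, Set.ncard_eq_toFinset_card', Set.toFinset_ofPred]

variable [NeZero (q - 1)]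

theorem weilProj_weilVec (hα : α ^ (q - 1) = 1) (hlam : lam ^ (q - 1) = 1) (j : ℕ) {u : U}
    (hu : u ≠ 0) : weilProj U q α lam j (weilVec q α lam j u) = weilVec q α lam j u := by
  have hα0 : α ≠ 0 := (IsUnit.of_pow_eq_one hα (NeZero.ne _)).ne_zero
  have hlam0 : lam ≠ 0 := (IsUnit.of_pow_eq_one hlam (NeZero.ne _)).ne_zero
  have hterm (i : ℕ) : weilProj U q α lam j
      ((lam ^ (i * j))⁻¹ • Finsupp.single (α ^ i • u) 1) =
        ((q - 1 : ℕ) : ℂ)⁻¹ • weilVec q α lam j u := by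
    rw [map_smul, weilProj_single (smul_ne_zero (pow_ne_zero i hα0) hu),
      weilVec_pow_smul hα hlam, smul_comm, smul_smul (lam ^ (i * j))⁻¹,
      inv_mul_cancel₀ (pow_ne_zero _ hlam0), one_smul]
  nth_rw 1 [weilVec]
  rw [map_sum, Finset.sum_congr rfl fun i _ => hterm i, Finset.sum_const, Finset.card_range,
    ← Nat.cast_smul_eq_nsmul ℂ, smul_smul, mul_inv_cancel₀ (NeZero.ne _), one_smul]

theorem isProj_weilProj (hα : α ^ (q - 1) = 1) (hlam : lam ^ (q - 1) = 1) (j : ℕ) :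
    LinearMap.IsProj (weilSub F q α lam j) (weilProj U q α lam j) where
  map_mem := weilProj_mem j
  map_id x hx := by
    have hle : weilSub F q α lam j ≤ LinearMap.eqLocus (weilProj U q α lam j) LinearMap.id :=
      weilSub_le_iff.2 fun u hu => weilProj_weilVec hα hlam j hu
    exact hle hx

theorem sum_weilProj_add_single_zero (hlam : IsPrimitiveRoot lam (q - 1)) (x : U →₀ ℂ) :
    ∑ j : Fin (q - 1), weilProj U q α lam j x + Finsupp.single 0 (x 0) = x := by
  have h : ∑ j : Fin (q - 1), weilProj U q α lam j +
      Finsupp.lsingle 0 ∘ₗ Finsupp.lapply 0 = LinearMap.id := by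
    ext1 u
    refine LinearMap.ext_ring ?_
    obtain rfl | hu := eq_or_ne u 0
    · simp [LinearMap.sum_apply, weilProj_single_zero]
    · simp [LinearMap.sum_apply, weilProj_single hu, ← Finset.smul_sum, sum_weilVec hlam, hu,
        NeZero.ne (((q - 1 : ℕ) : ℂ))]
  simpa [LinearMap.sum_apply] using LinearMap.congr_fun h x

theorem exists_pos_forall_trace_weilMap_comp_weilProj_eq [Finite U]
    (hα : IsPrimitiveRoot α (q - 1)) {m : ℕ} (hm : m < q - 1) {f : U →ₗ[F] U}
    (hf : ∃ u ≠ 0, f u = (α ^ m)⁻¹ • u)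
    (huniq : ∀ (γ : F) (u : U), u ≠ 0 → f u = γ • u → γ = (α ^ m)⁻¹) :
    ∃ r : ℝ, 0 < r ∧ ∀ j : ℕ,
      LinearMap.trace ℂ (U →₀ ℂ) (weilMap f ∘ₗ weilProj U q α lam j) =
        r * (lam ^ (m * j))⁻¹ := by
  have hα0 : α ≠ 0 := hα.ne_zero (NeZero.ne _)
  have hempty (i : ℕ) (hi : i ∈ Finset.range (q - 1)) (him : i ≠ m) :
      {u : U | u ≠ 0 ∧ α ^ i • f u = u} = ∅ := by
    refine Set.eq_empty_of_forall_notMem fun u ⟨hu, hfu⟩ => him ?_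
    have h := huniq (α ^ i)⁻¹ u hu ((eq_inv_smul_iff₀ (pow_ne_zero i hα0)).2 hfu)
    exact hα.pow_inj (Finset.mem_range.1 hi) hm (inv_injective h)
  have hpos : 0 < {u : U | u ≠ 0 ∧ α ^ m • f u = u}.ncard := by
    obtain ⟨u, hu, hfu⟩ := hf
    exact (Set.ncard_pos (Set.toFinite _)).2 ⟨u, hu, (eq_inv_smul_iff₀ (pow_ne_zero m hα0)).1 hfu⟩
  have hq : 0 < q - 1 := NeZero.pos _
  refine ⟨((q - 1 : ℕ) : ℝ)⁻¹ * {u : U | u ≠ 0 ∧ α ^ m • f u = u}.ncard, by positivity,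
    fun j => ?_⟩
  rw [trace_weilMap_comp_weilProj, Finset.sum_eq_single_of_mem m (Finset.mem_range.2 hm)
    fun i hi him => by rw [hempty i hi him, Set.ncard_empty, Nat.cast_zero, mul_zero]]
  push_cast
  ring

variable {V : Type*} [AddCommGroup V] [Module ℂ V]
  {ι : Fin (q - 1) → (U →₀ ℂ) →ₗ[ℂ] V}

theorem iSup_map_weilSub_eq_top [Finite U] (hlam : IsPrimitiveRoot lam (q - 1))
    (e : (V × ℂ) ≃ₗ[ℂ] (U →₀ ℂ))
    (hι : ∀ j : Fin (q - 1), ∀ x ∈ weilSub F q α lam j, ι j x = 0 → x = 0)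
    (hind : iSupIndep fun j : Fin (q - 1) => (weilSub F q α lam j).map (ι j)) :
    ⨆ j : Fin (q - 1), (weilSub F q α lam j).map (ι j) = ⊤ := by
  have hmem (j : Fin (q - 1)) (x : U →₀ ℂ) :
      ι j (weilProj _ q α lam j x) ∈ (weilSub F q α lam j).map (ι j) :=
    Submodule.mem_map_of_mem (weilProj_mem _ x)
  let J : (U →₀ ℂ) →ₗ[ℂ] V × ℂ :=
    (∑ j : Fin (q - 1), ι j ∘ₗ weilProj _ q α lam j).prod (Finsupp.lapply 0)
  have hfst (x) : (J x).1 = ∑ j : Fin (q - 1), ι j (weilProj _ q α lam j x) := by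
    simp [J]
  have hJ : Function.Injective J := (injective_iff_map_eq_zero J).2 fun x hx => by
    have hx0 : x 0 = 0 := congrArg Prod.snd hx
    have hzero := (iSupIndep_iff_finsetSum_eq_zero_imp_eq_zero _).1 hind Finset.univ
      (fun j => ι j (weilProj _ q α lam j x)) (fun j _ => hmem j x)
      ((hfst x).symm.trans (congrArg Prod.fst hx))
    rw [← sum_weilProj_add_single_zero (α := α) hlam x, hx0, Finsupp.single_zero, add_zero]
    exact Finset.sum_eq_zero fun j hj => hι j _ (weilProj_mem _ x) (hzero j hj)
  have hsurj : Function.Surjective J := by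
    have hEnd : Function.Surjective (e.toLinearMap ∘ₗ J) :=
      LinearMap.surjective_of_injective (e.injective.comp hJ)
    exact (EquivLike.comp_surjective J e).1 hEnd
  refine Submodule.eq_top_iff'.2 fun v => ?_
  obtain ⟨x, hx⟩ := hsurj (v, 0)
  rw [show v = ∑ j : Fin (q - 1), ι j (weilProj _ q α lam j x) by rw [← hfst, hx]]
  exact Submodule.sum_mem _ fun j _ => Submodule.mem_iSup_of_mem j (hmem j x)

end WeilProjection

section TraceDecomposition

variable {K W V : Type*} [Field K] [AddCommGroup W] [Module K W] [AddCommGroup V] [Module K V]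

theorem trace_restrict_map_eq_mul {p : Submodule K W} {ι : W →ₗ[K] V}
    (hι : ∀ x ∈ p, ι x = 0 → x = 0) {f : Module.End K W} (hf : ∀ x ∈ p, f x ∈ p)
    {φ : Module.End K V} {c : K} (hφ : ∀ x ∈ p, φ (ι x) = c • ι (f x))
    (hmap : ∀ y ∈ p.map ι, φ y ∈ p.map ι) :
    LinearMap.trace K (p.map ι) (φ.restrict hmap) = c * LinearMap.trace K p (f.restrict hf) := by
  let ιp : p →ₗ[K] p.map ι := ι.restrict fun _ hx => Submodule.mem_map_of_mem hx
  have hinj : Function.Injective ιp := (injective_iff_map_eq_zero ιp).2 fun x hx =>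
    Subtype.ext (hι x x.2 (congrArg Subtype.val hx))
  have hsurj : Function.Surjective ιp := by
    rintro ⟨_, x, hx, rfl⟩
    exact ⟨⟨x, hx⟩, rfl⟩
  let e : p ≃ₗ[K] p.map ι := LinearEquiv.ofBijective ιp ⟨hinj, hsurj⟩
  have hconj : φ.restrict hmap = e.conj (c • f.restrict hf) := by
    ext y
    obtain ⟨x, rfl⟩ := e.surjective y
    rw [LinearEquiv.conj_apply_apply, e.symm_apply_apply, LinearMap.smul_apply, map_smul]
    exact hφ x x.2
  rw [hconj, LinearMap.trace_conj', map_smul, smul_eq_mul]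

theorem trace_restrict_eq_trace_comp_of_isProj [FiniteDimensional K W] {p : Submodule K W}
    {P : Module.End K W} (hP : LinearMap.IsProj p P) {f : Module.End K W}
    (hf : ∀ x ∈ p, f x ∈ p) :
    LinearMap.trace K p (f.restrict hf) = LinearMap.trace K W (f ∘ₗ P) := by
  have hmem (x : W) : (f ∘ₗ P) x ∈ p := hf _ (hP.map_mem x)
  rw [← LinearMap.trace_restrict_eq_of_forall_mem p (f ∘ₗ P) hmem]
  congr 1
  ext x
  exact congrArg f (hP.map_id x x.2).symm

theorem trace_eq_sum_mul_trace_comp [FiniteDimensional K W] {κ : Type*} [Fintype κ]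
    {p : κ → Submodule K W} {P : κ → Module.End K W} (hP : ∀ j, LinearMap.IsProj (p j) (P j))
    {ι : κ → W →ₗ[K] V} (hι : ∀ j, ∀ x ∈ p j, ι j x = 0 → x = 0)
    (hind : iSupIndep fun j => (p j).map (ι j)) (htop : ⨆ j, (p j).map (ι j) = ⊤)
    {f : Module.End K W} (hf : ∀ j, ∀ x ∈ p j, f x ∈ p j) {φ : Module.End K V} {c : κ → K}
    (hφ : ∀ j, ∀ x ∈ p j, φ (ι j x) = c j • ι j (f x)) :
    LinearMap.trace K V φ = ∑ j, c j * LinearMap.trace K W (f ∘ₗ P j) := by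
  classical
  have hmap (j : κ) : ∀ y ∈ (p j).map (ι j), φ y ∈ (p j).map (ι j) := by
    rintro _ ⟨x, hx, rfl⟩
    rw [hφ j x hx]
    exact Submodule.smul_mem _ _ (Submodule.mem_map_of_mem (hf j x hx))
  rw [LinearMap.trace_eq_sum_trace_restrict
    (DirectSum.isInternal_submodule_of_iSupIndep_of_iSup_eq_top hind htop) hmap]
  refine Finset.sum_congr rfl fun j _ => ?_
  rw [trace_restrict_map_eq_mul (hι j) (hf j) (hφ j), trace_restrict_eq_trace_comp_of_isProj (hP j)]

end TraceDecomposition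

section TwistedEmbedding

variable {n q : ℕ} {F : Type*} [Field F] [Fintype F] {α : F} {lam : ℂ} {j : ℕ}
  {V : Type*} [AddCommGroup V] [Module ℂ V] {Φ : Representation ℂ (GL (Fin n) F) V}

theorem glWeilMap_eq_weilMap (g : GL (Fin n) F) :
    glWeilMap g = weilMap (g : Matrix (Fin n) (Fin n) F).mulVecLin :=
  rfl

theorem exists_glWeilMap_eq_weilMap {f : (Fin n → F) →ₗ[F] Fin n → F}
    (hf : LinearMap.det f ≠ 0) :
    ∃ g : GL (Fin n) F,
      (g : Matrix (Fin n) (Fin n) F).det = LinearMap.det f ∧ glWeilMap g = weilMap f := by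
  have hdet : (LinearMap.toMatrix' f).det = LinearMap.det f := LinearMap.det_toMatrix' f
  refine ⟨Matrix.GeneralLinearGroup.mkOfDetNeZero (LinearMap.toMatrix' f) (hdet ▸ hf), hdet, ?_⟩
  rw [glWeilMap_eq_weilMap]
  exact congrArg weilMap (Matrix.toLin'_toMatrix' f)

theorem glWeilMap_one : glWeilMap (1 : GL (Fin n) F) = LinearMap.id := by
  rw [glWeilMap_eq_weilMap, Units.val_one, Matrix.mulVecLin_one, weilMap_id]

theorem glWeilMap_mul_apply (g h : GL (Fin n) F) (x : (Fin n → F) →₀ ℂ) :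
    glWeilMap (g * h) x = glWeilMap g (glWeilMap h x) := by
  rw [glWeilMap_eq_weilMap, Units.val_mul, Matrix.mulVecLin_mul, weilMap_comp]
  rfl

theorem glWeilMap_mem_weilSub (g : GL (Fin n) F) {x : (Fin n → F) →₀ ℂ}
    (hx : x ∈ weilSub F q α lam j) : glWeilMap g x ∈ weilSub F q α lam j := by
  have hinj : Function.Injective (g : Matrix (Fin n) (Fin n) F).mulVecLin :=
    Matrix.mulVec_injective_of_isUnit g.isUnit
  exact weilMap_mem_weilSub hinj hx

/-- `ι` embeds into `Φ` the twist of `W_j(F ^ n)` by the linear character of `GL (Fin n) F` sending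
`g` to `c ^ k` whenever `det g = α ^ k`; only the values of `ι` on `W_j(F ^ n)` matter. -/
structure IsTwistedEmbedding (q : ℕ) (α : F) (lam : ℂ) (j : ℕ)
    (Φ : Representation ℂ (GL (Fin n) F) V) (c : ℂ) (ι : ((Fin n → F) →₀ ℂ) →ₗ[ℂ] V) : Prop where
  eq_zero_of_apply_eq_zero : ∀ x ∈ weilSub F q α lam j, ι x = 0 → x = 0
  apply_eq_pow_smul : ∀ (g : GL (Fin n) F) (k : ℕ),
    (g : Matrix (Fin n) (Fin n) F).det = α ^ k →
      ∀ x ∈ weilSub F q α lam j, Φ g (ι x) = c ^ k • ι (glWeilMap g x)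

namespace IsTwistedEmbedding

variable {c : ℂ} {ι : ((Fin n → F) →₀ ℂ) →ₗ[ℂ] V}

theorem apply_eq_of_det_eq_one (h : IsTwistedEmbedding q α lam j Φ c ι) {g : GL (Fin n) F}
    (hg : (g : Matrix (Fin n) (Fin n) F).det = 1) {x : (Fin n → F) →₀ ℂ}
    (hx : x ∈ weilSub F q α lam j) : Φ g (ι x) = ι (glWeilMap g x) := by
  rw [h.apply_eq_pow_smul g 0 (hg.trans (pow_zero α).symm) x hx, pow_zero, one_smul]

theorem of_apply_eq_smul (hinj : ∀ x ∈ weilSub F q α lam j, ι x = 0 → x = 0)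
    (hSL : ∀ g : GL (Fin n) F, (g : Matrix (Fin n) (Fin n) F).det = 1 →
      ∀ x ∈ weilSub F q α lam j, Φ g (ι x) = ι (glWeilMap g x))
    {g₁ : GL (Fin n) F} (hg₁ : (g₁ : Matrix (Fin n) (Fin n) F).det = α)
    (hc : ∀ x ∈ weilSub F q α lam j, Φ g₁ (ι x) = c • ι (glWeilMap g₁ x)) :
    IsTwistedEmbedding q α lam j Φ c ι where
  eq_zero_of_apply_eq_zero := hinj
  apply_eq_pow_smul g k hg x hx := by
    have hpow (k : ℕ) : ∀ x ∈ weilSub F q α lam j,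
        Φ (g₁ ^ k) (ι x) = c ^ k • ι (glWeilMap (g₁ ^ k) x) := by
      induction k with
      | zero => intro x _; simp [glWeilMap_one]
      | succ k ih =>
        intro x hx
        rw [pow_succ', map_mul, Module.End.mul_apply, ih x hx, map_smul,
          hc _ (glWeilMap_mem_weilSub _ hx), smul_smul, ← glWeilMap_mul_apply, pow_succ]
    have hs : ((g * (g₁ ^ k)⁻¹ : GL (Fin n) F) : Matrix (Fin n) (Fin n) F).det = 1 := by
      have hα : α ^ k ≠ 0 := by
        rw [← hg]
        exact (Matrix.GeneralLinearGroup.det g).ne_zero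
      simp [Matrix.coe_units_inv, hg, hg₁, hα]
    calc Φ g (ι x) = Φ (g * (g₁ ^ k)⁻¹) (Φ (g₁ ^ k) (ι x)) := by
          rw [← Module.End.mul_apply, ← map_mul, inv_mul_cancel_right]
      _ = c ^ k • ι (glWeilMap g x) := by
          rw [hpow k x hx, map_smul, hSL _ hs _ (glWeilMap_mem_weilSub _ hx),
            ← glWeilMap_mul_apply, inv_mul_cancel_right]

theorem norm_eq_one [NeZero n] [NeZero (q - 1)] (hα : IsPrimitiveRoot α (q - 1))
    (h : IsTwistedEmbedding q α lam j Φ c ι) : ‖c‖ = 1 := by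
  obtain ⟨u, hu⟩ := exists_ne (0 : Fin n → F)
  have hmem := weilVec_mem_weilSub (q := q) (α := α) (lam := lam) j hu
  have hvec : weilVec q α lam j u ≠ 0 := fun h0 => by
    simpa [h0] using weilVec_apply_self (lam := lam) hα j hu
  have hι : ι (weilVec q α lam j u) ≠ 0 := fun h0 =>
    hvec (h.eq_zero_of_apply_eq_zero _ hmem h0)
  have hone := h.apply_eq_pow_smul 1 (q - 1) (by simp [hα.pow_eq_one]) _ hmem
  rw [map_one, Module.End.one_apply, glWeilMap_one, LinearMap.id_apply] at hone
  have hc : c ^ (q - 1) = 1 := smul_left_injective ℂ hι (hone.symm.trans (one_smul ℂ _).symm)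
  exact Complex.norm_eq_one_of_pow_eq_one hc (NeZero.ne _)

end IsTwistedEmbedding

end TwistedEmbedding

section Decomposition

variable {n q : ℕ} {F : Type*} [Field F] [Fintype F] {α : F} {lam : ℂ} {j : ℕ}
  {V : Type*} [AddCommGroup V] [Module ℂ V] {Φ : Representation ℂ (GL (Fin n) F) V}
  {Ψ : (V × ℂ) ≃ₗ[ℂ] ((Fin n → F) →₀ ℂ)}

/-- `Ψ` is an isomorphism `Φ ⊕ 𝟙 ≅ W(F ^ n)` of representations of the special linear group,
realised as the matrices of determinant one in `GL (Fin n) F`. -/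
def IntertwinesOnSL (Φ : Representation ℂ (GL (Fin n) F) V)
    (Ψ : (V × ℂ) ≃ₗ[ℂ] ((Fin n → F) →₀ ℂ)) : Prop :=
  ∀ g : GL (Fin n) F, (g : Matrix (Fin n) (Fin n) F).det = 1 →
    ∀ xc : V × ℂ, Ψ (Φ g xc.1, xc.2) = glWeilMap g (Ψ xc)

theorem IntertwinesOnSL.symm_glWeilMap (hΨ : IntertwinesOnSL Φ Ψ)
    {g : GL (Fin n) F} (hg : (g : Matrix (Fin n) (Fin n) F).det = 1) (x : (Fin n → F) →₀ ℂ) :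
    Ψ.symm (glWeilMap g x) = (Φ g (Ψ.symm x).1, (Ψ.symm x).2) := by
  rw [LinearEquiv.symm_apply_eq, hΨ g hg, LinearEquiv.apply_symm_apply]

variable [NeZero (q - 1)]

theorem IntertwinesOnSL.apply_fst_symm_eq_self (hΨ : IntertwinesOnSL Φ Ψ) (hn : 2 < n)
    (hα : α ^ (q - 1) = 1) (hlam : lam ^ (q - 1) = 1) (hj : lam ^ j ≠ 1)
    {x : (Fin n → F) →₀ ℂ} (hx : x ∈ weilSub F q α lam j) : Ψ ((Ψ.symm x).1, 0) = x := by
  have hsnd : (LinearMap.snd ℂ V ℂ ∘ₗ Ψ.symm.toLinearMap) x = 0 :=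
    eq_zero_of_invariant (by simpa using hn) hα hlam hj (fun f hf y _ => by
      obtain ⟨g, hg, hgf⟩ := exists_glWeilMap_eq_weilMap (hf ▸ one_ne_zero)
      rw [← hgf, LinearMap.comp_apply, LinearEquiv.coe_coe, hΨ.symm_glWeilMap (hg.trans hf)]
      rfl) hx
  rw [← LinearEquiv.eq_symm_apply]
  exact Prod.ext rfl hsnd.symm

theorem IntertwinesOnSL.exists_apply_fst_symm_eq_smul (hΨ : IntertwinesOnSL Φ Ψ) (hn : 2 < n)
    (hα : IsPrimitiveRoot α (q - 1)) (hgen : ∀ x : F, x ≠ 0 → ∃ i : ℕ, x = α ^ i)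
    (hlam : lam ^ (q - 1) = 1) (hj : lam ^ j ≠ 1) (g : GL (Fin n) F) :
    ∃ c : ℂ, ∀ x ∈ weilSub F q α lam j,
      Φ g (Ψ.symm x).1 = c • (Ψ.symm (glWeilMap g x)).1 := by
  let T : ((Fin n → F) →₀ ℂ) →ₗ[ℂ] ((Fin n → F) →₀ ℂ) := Ψ.toLinearMap ∘ₗ LinearMap.inl ℂ V ℂ ∘ₗ
    Φ g ∘ₗ LinearMap.fst ℂ V ℂ ∘ₗ Ψ.symm.toLinearMap ∘ₗ glWeilMap g⁻¹
  have hT (x) : T x = Ψ (Φ g (Ψ.symm (glWeilMap g⁻¹ x)).1, 0) := rfl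
  have hequiv {s : GL (Fin n) F} (hs : (s : Matrix (Fin n) (Fin n) F).det = 1) (x) :
      T (glWeilMap s x) = glWeilMap s (T x) := by
    have hs' : ((g⁻¹ * s * g : GL (Fin n) F) : Matrix (Fin n) (Fin n) F).det = 1 := by
      rw [Units.val_mul, Units.val_mul, Matrix.det_units_conj', hs]
    have hconj : glWeilMap g⁻¹ (glWeilMap s x) =
        glWeilMap (g⁻¹ * s * g) (glWeilMap g⁻¹ x) := by
      rw [← glWeilMap_mul_apply, ← glWeilMap_mul_apply, mul_inv_cancel_right]
    have hΦ (v : V) : Φ g (Φ (g⁻¹ * s * g) v) = Φ s (Φ g v) := by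
      rw [← Module.End.mul_apply, ← Module.End.mul_apply, ← map_mul, ← map_mul, mul_assoc,
        mul_inv_cancel_left]
    rw [hT, hT, hconj, hΨ.symm_glWeilMap hs', hΦ]
    exact hΨ s hs (_, 0)
  obtain ⟨c, hc⟩ := exists_eq_smul_of_equivariant (by simpa using hn) hα hgen hlam hj (T := T)
    fun f hf x _ => by
      obtain ⟨s, hs, hsf⟩ := exists_glWeilMap_eq_weilMap (hf ▸ one_ne_zero)
      rw [← hsf, hequiv (hs.trans hf)]
  refine ⟨c, fun x hx => ?_⟩
  have hgx := glWeilMap_mem_weilSub g hx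
  have h := hc _ hgx
  rw [hT, ← glWeilMap_mul_apply, inv_mul_cancel, glWeilMap_one, LinearMap.id_apply,
    ← LinearEquiv.eq_symm_apply, map_smul] at h
  exact congrArg Prod.fst h

theorem IntertwinesOnSL.exists_isTwistedEmbedding (hΨ : IntertwinesOnSL Φ Ψ) (hn : 2 < n)
    (hα : IsPrimitiveRoot α (q - 1)) (hgen : ∀ x : F, x ≠ 0 → ∃ i : ℕ, x = α ^ i)
    (hlam : lam ^ (q - 1) = 1) (hj : lam ^ j ≠ 1) :
    ∃ c ι, IsTwistedEmbedding q α lam j Φ c ι := by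
  have hα0 : α ≠ 0 := hα.ne_zero (NeZero.ne _)
  obtain ⟨f, hf, -⟩ := exists_det_eq_with_unique_eigenvalue
    (U := Fin n → F) (by simpa using hn) hα0 hα0
  obtain ⟨g, hg, -⟩ := exists_glWeilMap_eq_weilMap (hf ▸ hα0)
  obtain ⟨c, hc⟩ := hΨ.exists_apply_fst_symm_eq_smul hn hα hgen hlam hj g
  refine ⟨c, LinearMap.fst ℂ V ℂ ∘ₗ Ψ.symm.toLinearMap, .of_apply_eq_smul (fun x hx h0 => ?_)
    (fun s hs x _ => ?_) (hg.trans hf) hc⟩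
  · have h0 : (Ψ.symm x).1 = 0 := h0
    rw [← hΨ.apply_fst_symm_eq_self hn hα.pow_eq_one hlam hj hx, h0]
    exact map_zero Ψ
  · exact (congrArg Prod.fst (hΨ.symm_glWeilMap hs x)).symm

theorem IsTwistedEmbedding.apply_mem_eigenspace {c : ℂ} {ι : ((Fin n → F) →₀ ℂ) →ₗ[ℂ] V}
    (h : IsTwistedEmbedding q α lam j Φ c ι) (hΨ : IntertwinesOnSL Φ Ψ) (hn : 2 < n)
    (hα : α ^ (q - 1) = 1) (hlam : lam ^ (q - 1) = 1)
    {x : (Fin n → F) →₀ ℂ} (hx : x ∈ weilSub F q α lam j) :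
    Ψ (ι x, 0) ∈ Module.End.eigenspace (weilScale (Fin n → F) α) (lam ^ j) := by
  refine apply_mem_eigenspace_of_equivariant (by simpa using hn) hα hlam
    (T := Ψ.toLinearMap ∘ₗ LinearMap.inl ℂ V ℂ ∘ₗ ι) (fun f hf y hy => ?_) hx
  obtain ⟨g, hg, hgf⟩ := exists_glWeilMap_eq_weilMap (hf ▸ one_ne_zero)
  have hg1 := hg.trans hf
  rw [← hgf]
  simp only [LinearMap.comp_apply, LinearMap.inl_apply, LinearEquiv.coe_coe]
  rw [← h.apply_eq_of_det_eq_one hg1 hy]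
  exact hΨ g hg1 (ι y, 0)

variable {c : Fin (q - 1) → ℂ} {ι : Fin (q - 1) → ((Fin n → F) →₀ ℂ) →ₗ[ℂ] V}

theorem iSupIndep_map_weilSub (hn : 2 < n) (hα : α ^ (q - 1) = 1)
    (hlam : IsPrimitiveRoot lam (q - 1)) (hΨ : IntertwinesOnSL Φ Ψ)
    (h : ∀ j : Fin (q - 1), IsTwistedEmbedding q α lam j Φ (c j) (ι j)) :
    iSupIndep fun j : Fin (q - 1) => (weilSub F q α lam j).map (ι j) := by
  have heigen : iSupIndep fun j : Fin (q - 1) =>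
      Module.End.eigenspace (weilScale (Fin n → F) α) (lam ^ (j : ℕ)) :=
    (Module.End.eigenspaces_iSupIndep _).comp fun i j hij => Fin.ext (hlam.pow_inj i.2 j.2 hij)
  rw [iSupIndep_iff_finsetSum_eq_zero_imp_eq_zero] at heigen ⊢
  intro s v hv hsum i hi
  let E : V →ₗ[ℂ] (Fin n → F) →₀ ℂ := Ψ.toLinearMap ∘ₗ LinearMap.inl ℂ V ℂ
  have hE : Function.Injective E := Ψ.injective.comp LinearMap.inl_injective
  refine (map_eq_zero_iff E hE).1 (heigen s (fun j => E (v j)) (fun j hj => ?_) ?_ i hi)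
  · obtain ⟨x, hx, hxv⟩ := hv j hj
    rw [← hxv]
    exact (h j).apply_mem_eigenspace hΨ hn hα hlam.pow_eq_one hx
  · rw [← map_sum, hsum, map_zero]

end Decomposition

section TwistedDecomposition

open scoped ComplexOrder

variable {n q : ℕ} [NeZero (q - 1)] {F : Type*} [Field F] [Fintype F] {α : F} {lam : ℂ}
  {V : Type*} [AddCommGroup V] [Module ℂ V] {Φ : Representation ℂ (GL (Fin n) F) V}
  {Ψ : (V × ℂ) ≃ₗ[ℂ] ((Fin n → F) →₀ ℂ)}

theorem IntertwinesOnSL.exists_forall_isTwistedEmbedding (hΨ : IntertwinesOnSL Φ Ψ) (hn : 2 < n)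
    (hα : IsPrimitiveRoot α (q - 1)) (hgen : ∀ x : F, x ≠ 0 → ∃ i : ℕ, x = α ^ i)
    (hlam : IsPrimitiveRoot lam (q - 1)) (h₀ : ∃ ι₀, IsTwistedEmbedding q α lam 0 Φ 1 ι₀) :
    ∃ (c : Fin (q - 1) → ℂ) (ι : Fin (q - 1) → ((Fin n → F) →₀ ℂ) →ₗ[ℂ] V),
      c 0 = 1 ∧ ∀ j : Fin (q - 1), IsTwistedEmbedding q α lam j Φ (c j) (ι j) := by
  have hex (j : Fin (q - 1)) :
      ∃ c ι, (j = 0 → c = 1) ∧ IsTwistedEmbedding q α lam j Φ c ι := by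
    obtain rfl | hj := eq_or_ne j 0
    · obtain ⟨ι₀, hι₀⟩ := h₀
      exact ⟨1, ι₀, fun _ => rfl, hι₀⟩
    · obtain ⟨c, ι, h⟩ := hΨ.exists_isTwistedEmbedding hn hα hgen hlam.pow_eq_one
        (hlam.pow_ne_one_of_pos_of_lt (Fin.val_ne_zero_iff.2 hj) j.isLt)
      exact ⟨c, ι, fun h0 => absurd h0 hj, h⟩
  choose c ι hc h using hex
  exact ⟨c, ι, hc 0 rfl, h⟩

theorem fourier_nonneg_of_trace_nonneg (hn : 2 < n) (hα : IsPrimitiveRoot α (q - 1))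
    (hlam : lam ^ (q - 1) = 1) {c : Fin (q - 1) → ℂ}
    {ι : Fin (q - 1) → ((Fin n → F) →₀ ℂ) →ₗ[ℂ] V}
    (h : ∀ j : Fin (q - 1), IsTwistedEmbedding q α lam j Φ (c j) (ι j))
    (hind : iSupIndep fun j : Fin (q - 1) => (weilSub F q α lam j).map (ι j))
    (htop : ⨆ j : Fin (q - 1), (weilSub F q α lam j).map (ι j) = ⊤)
    (htrace : ∀ g, 0 ≤ LinearMap.trace ℂ V (Φ g)) {m : ℕ} (hm : m < q - 1) :
    0 ≤ ∑ j, c j * (lam ^ (m * (j : ℕ)))⁻¹ := by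
  have hα0 : α ≠ 0 := hα.ne_zero (NeZero.ne _)
  obtain ⟨f, hf, hev, huniq⟩ := exists_det_eq_with_unique_eigenvalue (U := Fin n → F)
    (by simpa using hn) hα0 (inv_ne_zero (pow_ne_zero m hα0))
  obtain ⟨g, hg, hgf⟩ := exists_glWeilMap_eq_weilMap (hf ▸ hα0)
  obtain ⟨r, hr, htr⟩ :=
    exists_pos_forall_trace_weilMap_comp_weilProj_eq (lam := lam) hα hm hev huniq
  have hsum : LinearMap.trace ℂ V (Φ g) = r * ∑ j, c j * (lam ^ (m * (j : ℕ)))⁻¹ := by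
    rw [trace_eq_sum_mul_trace_comp (fun j : Fin (q - 1) => isProj_weilProj hα.pow_eq_one hlam j)
      (fun j => (h j).eq_zero_of_apply_eq_zero) hind htop
      (fun j x hx => glWeilMap_mem_weilSub g hx) (fun j x hx => by
        rw [(h j).apply_eq_pow_smul g 1 ((hg.trans hf).trans (pow_one α).symm) x hx, pow_one]),
      hgf, Finset.mul_sum]
    exact Finset.sum_congr rfl fun j _ => by rw [htr, mul_left_comm]
  rw [← inv_mul_cancel_left₀ (Complex.ofReal_ne_zero.2 hr.ne') (∑ j, _), ← hsum,
    ← Complex.ofReal_inv]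
  exact mul_nonneg (Complex.zero_le_real.2 (inv_nonneg.2 hr.le)) (htrace g)

theorem IntertwinesOnSL.exists_forall_isTwistedEmbedding_pow (hΨ : IntertwinesOnSL Φ Ψ)
    (hn : 2 < n) (hα : IsPrimitiveRoot α (q - 1))
    (hgen : ∀ x : F, x ≠ 0 → ∃ i : ℕ, x = α ^ i) (hlam : IsPrimitiveRoot lam (q - 1))
    (h₀ : ∃ ι₀, IsTwistedEmbedding q α lam 0 Φ 1 ι₀)
    (htrace : ∀ g, 0 ≤ LinearMap.trace ℂ V (Φ g)) :
    ∃ (e : ℕ) (ι : Fin (q - 1) → ((Fin n → F) →₀ ℂ) →ₗ[ℂ] V),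
      (∀ j : Fin (q - 1), IsTwistedEmbedding q α lam j Φ (lam ^ (e * (j : ℕ))) (ι j)) ∧
      iSupIndep (fun j : Fin (q - 1) => (weilSub F q α lam j).map (ι j)) ∧
      ⨆ j : Fin (q - 1), (weilSub F q α lam j).map (ι j) = ⊤ := by
  have : NeZero n := ⟨by omega⟩
  obtain ⟨c, ι, hc0, h⟩ := hΨ.exists_forall_isTwistedEmbedding hn hα hgen hlam h₀
  have hind := iSupIndep_map_weilSub hn hα.pow_eq_one hlam hΨ h
  have htop := iSup_map_weilSub_eq_top hlam Ψ (fun j => (h j).eq_zero_of_apply_eq_zero) hind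
  obtain ⟨e, he⟩ := exists_forall_eq_pow_of_fourier_nonneg hlam (fun j => (h j).norm_eq_one hα)
    hc0 fun m => fourier_nonneg_of_trace_nonneg hn hα hlam.pow_eq_one h hind htop htrace
  exact ⟨e, ι, fun j => he j ▸ h j, hind, htop⟩

end TwistedDecomposition

section Generator

variable {F : Type*} [Field F] {α : F}

-- `α` itself may fail to be primitive: if `F` has two elements, it can be `0`, since `0 ^ 0 = 1`.
theorem exists_isPrimitiveRoot_forall_pow_eq [Fintype F]
    (hα : ∀ x : F, x ≠ 0 → ∃ i : ℕ, x = α ^ i) :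
    ∃ a : F, IsPrimitiveRoot a (Fintype.card F - 1) ∧
      ∀ i < Fintype.card F - 1, a ^ i = α ^ i := by
  classical
  obtain rfl | hα0 := eq_or_ne α 0
  · have hone (x : Fˣ) : x = 1 := by
      obtain ⟨i, hi⟩ := hα x x.ne_zero
      obtain rfl | hi0 := eq_or_ne i 0
      · exact Units.ext (hi.trans (pow_zero 0))
      · exact absurd (hi.trans (zero_pow hi0)) x.ne_zero
    have hcard : Fintype.card F - 1 = 1 := by
      rw [← Fintype.card_units, Fintype.card_eq_one_iff]
      exact ⟨1, hone⟩
    rw [hcard]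
    refine ⟨1, IsPrimitiveRoot.one, fun i hi => ?_⟩
    rw [Nat.lt_one_iff.1 hi, pow_zero, pow_zero]
  · have hzpowers (x : Fˣ) : x ∈ Subgroup.zpowers (Units.mk0 α hα0) := by
      obtain ⟨i, hi⟩ := hα x x.ne_zero
      exact ⟨i, Units.ext (by simp [hi])⟩
    have horder := orderOf_eq_card_of_forall_mem_zpowers hzpowers
    rw [Nat.card_eq_fintype_card, Fintype.card_units, ← orderOf_units, Units.val_mk0] at horder
    exact ⟨α, horder ▸ IsPrimitiveRoot.orderOf α, fun _ _ => rfl⟩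

theorem weilSub_congr {U : Type*} [AddCommGroup U] [Module F U] {q : ℕ} {a : F}
    (h : ∀ i < q - 1, a ^ i = α ^ i) (lam : ℂ) (j : ℕ) :
    weilSub F (U := U) q a lam j = weilSub F q α lam j := by
  have hvec : (weilVec q a lam j : U → U →₀ ℂ) = weilVec q α lam j := funext fun u =>
    Finset.sum_congr rfl fun i hi => by rw [h i (Finset.mem_range.1 hi)]
  rw [weilSub, weilSub, hvec]

end Generator

open scoped ComplexOrder in
theorem statement14_general (q n : ℕ) (hn : 3 ≤ n)
    (Fq : Type*) [Field Fq] [Fintype Fq] (hcard : Fintype.card Fq = q)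
    (α : Fq) (hα : ∀ x : Fq, x ≠ 0 → ∃ i : ℕ, x = α ^ i)
    (lam : ℂ) (hlam : IsPrimitiveRoot lam (q - 1))
    (V : Type*) [AddCommGroup V] [Module ℂ V]
    (Φ : Representation ℂ (GL (Fin n) Fq) V)
    (ha : ∃ ι₀ : ((Fin n → Fq) →₀ ℂ) →ₗ[ℂ] V,
      (∀ x ∈ weilSub Fq (U := Fin n → Fq) q α lam 0, ι₀ x = 0 → x = 0)
      ∧ ∀ g : GL (Fin n) Fq, ∀ x ∈ weilSub Fq (U := Fin n → Fq) q α lam 0,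
          ι₀ (glWeilMap g x) = Φ g (ι₀ x))
    (hb : ∃ Ψ : (V × ℂ) ≃ₗ[ℂ] ((Fin n → Fq) →₀ ℂ), IntertwinesOnSL Φ Ψ)
    (hc : ∀ g : GL (Fin n) Fq, 0 ≤ LinearMap.trace ℂ V (Φ g))
    (X : GL (Fin n) Fq → ℂ)
    (hX : ∀ (g : GL (Fin n) Fq) (k : ℕ),
      (g : Matrix (Fin n) (Fin n) Fq).det = α ^ k → X g = lam ^ k) :
    ∃ (e : ℤ) (ι : Fin (q - 1) → ((Fin n → Fq) →₀ ℂ) →ₗ[ℂ] V),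
      (∀ j : Fin (q - 1), ∀ x ∈ weilSub Fq (U := Fin n → Fq) q α lam (j : ℕ),
          ι j x = 0 → x = 0)
      ∧ iSupIndep (fun j : Fin (q - 1) =>
          (weilSub Fq (U := Fin n → Fq) q α lam (j : ℕ)).map (ι j))
      ∧ (⨆ j : Fin (q - 1),
          (weilSub Fq (U := Fin n → Fq) q α lam (j : ℕ)).map (ι j)) = ⊤
      ∧ (∀ j : Fin (q - 1), ∀ g : GL (Fin n) Fq,
          ∀ x ∈ weilSub Fq (U := Fin n → Fq) q α lam (j : ℕ),
            Φ g (ι j x) = X g ^ (e * (j : ℕ)) • ι j (glWeilMap g x)) := by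
  obtain rfl := hcard
  have : NeZero (Fintype.card Fq - 1) := ⟨(Nat.sub_pos_of_lt Fintype.one_lt_card).ne'⟩
  obtain ⟨a, hprim, hpow⟩ := exists_isPrimitiveRoot_forall_pow_eq hα
  have hgen (x : Fq) (hx : x ≠ 0) : ∃ i < Fintype.card Fq - 1, a ^ i = x :=
    hprim.eq_pow_of_pow_eq_one (FiniteField.pow_card_sub_one_eq_one x hx)
  obtain ⟨Ψ, hΨ⟩ := hb
  obtain ⟨ι₀, hinj₀, hι₀⟩ := ha
  simp only [← weilSub_congr hpow] at hinj₀ hι₀ ⊢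
  obtain ⟨e, ι, h, hind, htop⟩ := hΨ.exists_forall_isTwistedEmbedding_pow hn hprim
    (fun x hx => (hgen x hx).imp fun _ hi => hi.2.symm) hlam
    ⟨ι₀, hinj₀, fun g k _ x hx => by rw [one_pow, one_smul, hι₀ g x hx]⟩ hc
  refine ⟨e, ι, fun j => (h j).eq_zero_of_apply_eq_zero, hind, htop, fun j g x hx => ?_⟩
  obtain ⟨k, hk, hdet⟩ := hgen _ (Matrix.GeneralLinearGroup.det g).ne_zero
  rw [(h j).apply_eq_pow_smul g k hdet.symm x hx, hX g k (hdet.symm.trans (hpow k hk)),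
    ← Nat.cast_mul, zpow_natCast, ← pow_mul, ← pow_mul, mul_comm k]

theorem statement14 (p q n : ℕ) (hp : p.Prime) (κ : ℕ) (hκ : 0 < κ) (hq : q = p ^ κ)
    (hn : 3 ≤ n)
    (Fq : Type*) [Field Fq] [Fintype Fq] (hcard : Fintype.card Fq = q)
    (α : Fq) (hα : ∀ x : Fq, x ≠ 0 → ∃ i : ℕ, x = α ^ i)
    (lam : ℂ) (hlam : IsPrimitiveRoot lam (q - 1))
    (V : Type*) [AddCommGroup V] [Module ℂ V] [FiniteDimensional ℂ V]
    (Φ : Representation ℂ (GL (Fin n) Fq) V)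
    -- (a) `W_0(F_q^n)` is isomorphic to a subrepresentation of `Φ`
    (ha : ∃ ι₀ : ((Fin n → Fq) →₀ ℂ) →ₗ[ℂ] V,
      (∀ x ∈ weilSub Fq (U := Fin n → Fq) q α lam 0, ι₀ x = 0 → x = 0)
      ∧ ∀ g : GL (Fin n) Fq, ∀ x ∈ weilSub Fq (U := Fin n → Fq) q α lam 0,
          ι₀ (glWeilMap g x) = Φ g (ι₀ x))
    -- (b) `Φ|_{SL_n(F_q)} ⊕ 𝟙 ≅ W(F_q^n)|_{SL_n(F_q)}`
    (hb : ∃ Ψ : (V × ℂ) ≃ₗ[ℂ] ((Fin n → Fq) →₀ ℂ),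
      ∀ g : GL (Fin n) Fq, (g : Matrix (Fin n) (Fin n) Fq).det = 1 →
        ∀ xc : V × ℂ, Ψ (Φ g xc.1, xc.2) = glWeilMap g (Ψ xc))
    -- (c) the character of `Φ ⊕ 𝟙` takes values in `{1, q, q², …, q^n}`
    (hc : ∀ g : GL (Fin n) Fq, ∃ i : ℕ, i ≤ n
      ∧ 1 + LinearMap.trace ℂ V (Φ g) = (q : ℂ) ^ i) :
    -- conclusion : Φ ≅ ⊕_{j=0}^{q-2} W_j ⊗ X^{e j} for some integer e, where X is the
    -- linear character with X(g) = λ^k whenever det g = α^k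
    ∀ X : GL (Fin n) Fq → ℂ,
      (∀ (g : GL (Fin n) Fq) (k : ℕ),
          (g : Matrix (Fin n) (Fin n) Fq).det = α ^ k → X g = lam ^ k) →
      ∃ (e : ℤ) (ι : Fin (q - 1) → ((Fin n → Fq) →₀ ℂ) →ₗ[ℂ] V),
        (∀ j : Fin (q - 1), ∀ x ∈ weilSub Fq (U := Fin n → Fq) q α lam (j : ℕ),
            ι j x = 0 → x = 0)
        ∧ iSupIndep (fun j : Fin (q - 1) =>
            (weilSub Fq (U := Fin n → Fq) q α lam (j : ℕ)).map (ι j))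
        ∧ (⨆ j : Fin (q - 1),
            (weilSub Fq (U := Fin n → Fq) q α lam (j : ℕ)).map (ι j)) = ⊤
        ∧ (∀ j : Fin (q - 1), ∀ g : GL (Fin n) Fq,
            ∀ x ∈ weilSub Fq (U := Fin n → Fq) q α lam (j : ℕ),
              Φ g (ι j x) = X g ^ (e * (j : ℕ)) • ι j (glWeilMap g x)) := by
  intro X hX
  exact statement14_general q n hn Fq hcard α hα lam hlam V Φ ha hb
    (fun g => (hc g).elim fun i hi => nonneg_of_one_add_eq_pow (hcard ▸ Fintype.card_pos) hi.2) X hX
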